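/- Let D be an integral domain and ⋆ a (semi)star operation on D (i.e., a semistar operation with D^⋆ = D). Then D is a ⋆-almost Dedekind domain if and only if D is a t-almost Dedekind domain and ⋆_f = t (i.e., E^{⋆_f} = E^t for every nonzero D-submodule E of K). -/

import Mathlib

open scoped Pointwise

section SemistarDefs

variable {D : Type*} [CommRing D] [IsDomain D]
variable {K : Type*} [Field K] [Algebra D K] [IsFractionRing D K]

/-- `star` is a semistar operation on the integral domain `D` with quotient field `K`:
a map on (nonzero) `D`-submodules of `K` satisfying `(xE)^⋆ = x·E^⋆`, monotonicity,
extensivity and idempotence. -/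
structure IsSemistarOperation (star : Submodule D K → Submodule D K) : Prop where
  ne_bot : ∀ {E : Submodule D K}, E ≠ ⊥ → star E ≠ ⊥
  map_smul : ∀ (x : K), x ≠ 0 → ∀ {E : Submodule D K}, E ≠ ⊥ →
    star (Submodule.map (LinearMap.mulLeft D x) E) = Submodule.map (LinearMap.mulLeft D x) (star E)
  mono : ∀ {E F : Submodule D K}, E ≠ ⊥ → F ≠ ⊥ → E ≤ F → star E ≤ star F
  le_star : ∀ {E : Submodule D K}, E ≠ ⊥ → E ≤ star E
  star_star : ∀ {E : Submodule D K}, E ≠ ⊥ → star (star E) = star E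

/-- The image in `K` of an ideal `I` of `D`, as a `D`-submodule of `K`. -/
def idealExt (K : Type*) [Field K] [Algebra D K] (I : Ideal D) : Submodule D K :=
  Submodule.map (Algebra.linearMap D K) I

/-- `I` is a quasi-⋆-ideal: a nonzero ideal of `D` with `I = I^⋆ ∩ D`. -/
def QuasiStarIdeal (star : Submodule D K → Submodule D K) (I : Ideal D) : Prop :=
  I ≠ ⊥ ∧ Submodule.comap (Algebra.linearMap D K) (star (idealExt K I)) = I

/-- `P` is a quasi-⋆-prime: a prime ideal which is a quasi-⋆-ideal. -/
def QuasiStarPrime (star : Submodule D K → Submodule D K) (P : Ideal D) : Prop :=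
  P.IsPrime ∧ QuasiStarIdeal star P

/-- `M` is a quasi-⋆-maximal ideal: maximal in the set of proper quasi-⋆-ideals of `D`. -/
def QuasiStarMaximal (star : Submodule D K → Submodule D K) (M : Ideal D) : Prop :=
  QuasiStarIdeal star M ∧ M ≠ ⊤ ∧
    ∀ J : Ideal D, QuasiStarIdeal star J → J ≠ ⊤ → M ≤ J → J = M

/-- The finite-type semistar operation `⋆_f` associated to `⋆`:
`E^{⋆_f} = ⋃ { F^⋆ : F nonzero finitely generated, F ⊆ E }`. -/
def finTypeOp (star : Submodule D K → Submodule D K) : Submodule D K → Submodule D K :=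
  fun E => ⨆ (F : Submodule D K) (_ : F ≠ ⊥) (_ : F.FG) (_ : F ≤ E), star F

/-- The extension `E·D_Q` of a `D`-submodule `E` of `K` to the localization of `D` at
(the complement of) `Q`, described as `{ x ∈ K : s·x ∈ E for some s ∉ Q }`. -/
def extendToPrime (Q : Ideal D) (E : Submodule D K) : Submodule D K :=
  Submodule.span D {x : K | ∃ s : D, s ∉ Q ∧ algebraMap D K s * x ∈ E}

/-- The stable semistar operation of finite type `⋆̃` associated to `⋆`:
`E^⋆̃ = ⋂ { E·D_Q : Q a quasi-⋆_f-maximal ideal of D }`. -/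
def stableOp (star : Submodule D K → Submodule D K) : Submodule D K → Submodule D K :=
  fun E => ⨅ (Q : Ideal D) (_ : QuasiStarMaximal (finTypeOp star) Q), extendToPrime Q E

/-- A rank-one discrete valuation ring: a (domain which is a) local PID which is not a field. -/
def IsDVR (R : Type*) [CommRing R] : Prop :=
  ∃ h : IsDomain R, @IsDiscreteValuationRing R _ h

/-- A valuation domain. -/
def IsValuationDomain (R : Type*) [CommRing R] : Prop :=
  ∃ h : IsDomain R, @ValuationRing R _ h

/-- `D` is a ⋆-almost Dedekind domain: `D_M` is a rank-one discrete valuation ring for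
every quasi-⋆_f-maximal ideal `M` of `D`. -/
def StarADD (star : Submodule D K → Submodule D K) : Prop :=
  ∀ (M : Ideal D) [M.IsPrime], QuasiStarMaximal (finTypeOp star) M →
    IsDVR (Localization.AtPrime M)

/-- `D` is a Prüfer ⋆-multiplication domain: `D_M` is a valuation domain for every
quasi-⋆_f-maximal ideal `M` of `D`. -/
def StarPMD (star : Submodule D K → Submodule D K) : Prop :=
  ∀ (M : Ideal D) [M.IsPrime], QuasiStarMaximal (finTypeOp star) M →
    IsValuationDomain (Localization.AtPrime M)

/-- `D` is ⋆-Noetherian: ascending chain condition on quasi-⋆-ideals. -/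
def StarNoetherian (star : Submodule D K → Submodule D K) : Prop :=
  ∀ c : ℕ →o Ideal D, (∀ n, QuasiStarIdeal star (c n)) → ∃ n, ∀ m, n ≤ m → c m = c n

/-- `D` is a ⋆-Dedekind domain: ⋆-Noetherian and a P⋆MD. -/
def StarDedekind (star : Submodule D K → Submodule D K) : Prop :=
  StarNoetherian star ∧ StarPMD star

/-- `D` has the ⋆_f-finite character property: every nonzero element of `D` lies in only
finitely many quasi-⋆_f-maximal ideals. -/
def StarFiniteCharacter (star : Submodule D K → Submodule D K) : Prop :=
  ∀ d : D, d ≠ 0 → {M : Ideal D | QuasiStarMaximal (finTypeOp star) M ∧ d ∈ M}.Finite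

/-- The `v`-operation `E ↦ (D : (D : E))`. -/
def vOp : Submodule D K → Submodule D K := fun E => 1 / (1 / E)

/-- A nonzero `D`-submodule `E` of `K` is quasi-∗-invertible if `(E·(D^∗ : E))^∗ = D^∗`. -/
def QuasiStarInvertible (star : Submodule D K → Submodule D K) (E : Submodule D K) : Prop :=
  star (E * (star 1 / E)) = star (1 : Submodule D K)

/-- `D` has the ∗-cancellation law: for nonzero fractional ideals `A`, `B`, `C`,
`(AB)^∗ = (AC)^∗` implies `B^∗ = C^∗`. -/
def StarCancellation (star : Submodule D K → Submodule D K) : Prop :=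
  ∀ A B C : Submodule D K, A ≠ ⊥ → B ≠ ⊥ → C ≠ ⊥ →
    IsFractional (nonZeroDivisors D) A → IsFractional (nonZeroDivisors D) B →
    IsFractional (nonZeroDivisors D) C →
    star (A * B) = star (A * C) → star B = star C

/-- The ∗-dimension of `D`: the supremum of the lengths of chains of quasi-∗-prime ideals
of `D` (between `(0)` and a quasi-∗-prime). -/
noncomputable def starDim (star : Submodule D K → Submodule D K) : ℕ∞ :=
  ⨆ (k : ℕ) (_ : ∃ c : Fin k → Ideal D, StrictMono c ∧ ∀ i, QuasiStarPrime star (c i)),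
    (k : ℕ∞)

/-- A submodule `T` of `K` (containing the image of an integral domain with quotient
field `K`) is integrally closed (in `K`) if every `x ∈ K` satisfying a monic polynomial
equation with coefficients in `T` belongs to `T`. -/
def IntegrallyClosedSub (T : Submodule D K) : Prop :=
  ∀ x : K, (∃ (n : ℕ) (c : Fin n → K), (∀ i, c i ∈ T) ∧
    x ^ n = ∑ i : Fin n, c i * x ^ (i : ℕ)) → x ∈ T

/-- The content ideal `c(p)` of a polynomial: the ideal generated by its coefficients. -/
def contentIdeal (p : Polynomial D) : Ideal D := Ideal.span (Set.range p.coeff)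

/-- The multiplicative set `N(⋆) = { h ∈ D[X] : h ≠ 0, c(h)^⋆ = D^⋆ }` (as a submonoid,
via the closure of this multiplicatively closed set). -/
noncomputable def nagataMonoid (star : Submodule D K → Submodule D K) : Submonoid (Polynomial D) :=
  Submonoid.closure
    {p : Polynomial D | p ≠ 0 ∧ star (idealExt K (contentIdeal p)) = star (1 : Submodule D K)}

/-- The Nagata ring `Na(D,⋆) = D[X]_{N(⋆)}`. -/
abbrev NagataRing (star : Submodule D K → Submodule D K) :=
  Localization (nagataMonoid star)

/-- `V` is a valuation overring of `D` (inside the quotient field `K`): `D ⊆ V ⊆ K` and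
for every nonzero `x ∈ K`, `x ∈ V` or `x⁻¹ ∈ V`. -/
def IsValuationOverring (D : Type*) [CommRing D] {K : Type*} [Field K] [Algebra D K]
    (V : Subring K) : Prop :=
  (∀ d : D, algebraMap D K d ∈ V) ∧ ∀ x : K, x ≠ 0 → (x ∈ V ∨ x⁻¹ ∈ V)

/-- `V` is a ∗-valuation overring of `D`: a valuation overring such that `F^∗ ⊆ FV` for
every nonzero finitely generated `D`-submodule `F` of `K`. -/
def IsStarValuationOverring (star : Submodule D K → Submodule D K) (V : Subring K) : Prop :=
  IsValuationOverring D V ∧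
    ∀ F : Submodule D K, F ≠ ⊥ → F.FG →
      star F ≤ Submodule.span D ((F : Set K) * (V : Set K))

/-- `D` is a Krull domain: there is a family of rank-one discrete valuation overrings of `D`
with quotient field `K` whose intersection is `D`, with finite character. -/
def IsKrullDomain (D : Type*) [CommRing D] (K : Type*) [Field K] [Algebra D K] : Prop :=
  ∃ 𝒱 : Set (Subring K),
    (∀ V ∈ 𝒱, (∀ d : D, algebraMap D K d ∈ V) ∧ IsDVR V ∧
      ∀ x : K, ∃ a ∈ V, ∃ b ∈ V, b ≠ 0 ∧ x * b = a) ∧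
    (⋂ V ∈ 𝒱, (V : Set K)) = Set.range (algebraMap D K) ∧
    ∀ d : D, d ≠ 0 → {V ∈ 𝒱 | ¬ ∃ y ∈ V, algebraMap D K d * y = 1}.Finite

end SemistarDefs

section Statement

variable {D : Type*} [CommRing D] [IsDomain D]
variable {K : Type*} [Field K] [Algebra D K] [IsFractionRing D K]

/-!
Over a valuation ring `D_M`, a finitely generated module `F` is generated by an element of maximal
value, so `F(D : F)` meets the complement of `M`. If `D` is a P⋆MD, then `F(D : F)` therefore lies
in no quasi-⋆_f-maximal ideal, that is, `(F(D : F))^{⋆_f} = D`, whence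
`F^v = F^v (F(D : F))^⋆ ⊆ (F F^v (D : F))^⋆ ⊆ F^⋆`. Since `F^⋆ ⊆ F^v` for every (semi)star
operation, `⋆_f = t`, and then `⋆_f` and `t` have the same quasi-maximal ideals.
-/

section Semistar

omit [IsDomain D] [IsFractionRing D K]

variable {star : Submodule D K → Submodule D K} {E F : Submodule D K} {I J M : Ideal D}

lemma map_ne_bot_of_injective {R N P : Type*} [Semiring R] [AddCommMonoid N] [AddCommMonoid P]
    [Module R N] [Module R P] {f : N →ₗ[R] P} (hf : Function.Injective f) {L : Submodule R N}
    (hL : L ≠ ⊥) : L.map f ≠ ⊥ :=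
  ((Submodule.map_injective_of_injective hf).ne_iff' (Submodule.map_bot f)).2 hL

lemma exists_le_of_fg_of_le_sSup {R N : Type*} [Semiring R] [AddCommMonoid N] [Module R N]
    {S : Set (Submodule R N)} (hS : S.Nonempty) (hdir : DirectedOn (· ≤ ·) S) {L : Submodule R N}
    (hL : L.FG) (hle : L ≤ sSup S) : ∃ P ∈ S, L ≤ P :=
  (CompleteLattice.isCompactElement_iff_le_of_directed_sSup_le _ L).1
    ((Submodule.fg_iff_compact L).1 hL) S hS hdir hle

lemma map_mulLeft_ne_bot {x : K} (hx : x ≠ 0) (hE : E ≠ ⊥) :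
    E.map (LinearMap.mulLeft D x) ≠ ⊥ :=
  map_ne_bot_of_injective (mul_right_injective₀ hx) hE

lemma map_mulLeft_map_mulLeft_of_mul_eq_one {x y : K} (hxy : x * y = 1) (E : Submodule D K) :
    (E.map (LinearMap.mulLeft D y)).map (LinearMap.mulLeft D x) = E := by
  rw [← Submodule.map_comp, ← LinearMap.mulLeft_mul, hxy, LinearMap.mulLeft_one, Submodule.map_id]

lemma idealExt_ne_bot [FaithfulSMul D K] (hI : I ≠ ⊥) : idealExt K I ≠ ⊥ :=
  map_ne_bot_of_injective (FaithfulSMul.algebraMap_injective D K) hI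

lemma idealExt_mul (I J : Ideal D) : idealExt K (I * J) = idealExt K I * idealExt K J :=
  Submodule.map_mul I J (Algebra.ofId D K)

lemma idealExt_comap (hE : E ≤ 1) :
    idealExt K (E.comap (Algebra.linearMap D K)) = E :=
  Submodule.map_comap_eq_of_le (Submodule.one_eq_range (R := D) (A := K) ▸ hE)

lemma star_le_finTypeOp (hF : F ≠ ⊥) (hfg : F.FG) (hFE : F ≤ E) : star F ≤ finTypeOp star E :=
  le_iSup₂_of_le F hF <| le_iSup₂_of_le hfg hFE le_rfl

lemma finTypeOp_mono (star : Submodule D K → Submodule D K) (hEF : E ≤ F) :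
    finTypeOp star E ≤ finTypeOp star F :=
  iSup₂_le fun _ hG ↦ iSup₂_le fun hfg hGE ↦ star_le_finTypeOp hG hfg (hGE.trans hEF)

namespace IsSemistarOperation

lemma mul_star_le (h : IsSemistarOperation star) (hE : E ≠ ⊥) (hF : F ≠ ⊥) :
    E * star F ≤ star (E * F) := by
  refine Submodule.mul_le.2 fun e he y hy ↦ ?_
  rcases eq_or_ne e 0 with rfl | he0
  · simp only [zero_mul, zero_mem]
  have heF : F.map (LinearMap.mulLeft D e) ≤ E * F :=
    Submodule.map_le_iff_le_comap.2 fun f hf ↦ Submodule.mul_mem_mul he hf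
  refine h.mono (map_mulLeft_ne_bot he0 hF) (mul_ne_zero hE hF) heF ?_
  rw [h.map_smul e he0 hF]
  exact Submodule.mem_map_of_mem hy

lemma finTypeOp_le_star (h : IsSemistarOperation star) (hE : E ≠ ⊥) :
    finTypeOp star E ≤ star E :=
  iSup₂_le fun _ hF ↦ iSup₂_le fun _ hFE ↦ h.mono hF hE hFE

lemma exists_fg_le_star (h : IsSemistarOperation star) (hE : E ≠ ⊥) (hfg : F.FG)
    (hF : F ≤ finTypeOp star E) : ∃ G ≠ ⊥, G.FG ∧ G ≤ E ∧ F ≤ star G := by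
  let S : Set (Submodule D K) := {G | G ≠ ⊥ ∧ G.FG ∧ G ≤ E}
  have hS : S.Nonempty := by
    obtain ⟨e, he, he0⟩ := Submodule.exists_mem_ne_zero_of_ne_bot hE
    exact ⟨D ∙ e, by simpa using he0, Submodule.fg_span_singleton e, by simpa using he⟩
  have hdir : DirectedOn (· ≤ ·) (star '' S) := by
    rintro _ ⟨G₁, h₁, rfl⟩ _ ⟨G₂, h₂, rfl⟩
    have hsup : G₁ ⊔ G₂ ≠ ⊥ := fun h0 ↦ h₁.1 (sup_eq_bot_iff.1 h0).1
    exact ⟨_, ⟨G₁ ⊔ G₂, ⟨hsup, h₁.2.1.sup h₂.2.1, sup_le h₁.2.2 h₂.2.2⟩, rfl⟩,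
      h.mono h₁.1 hsup le_sup_left, h.mono h₂.1 hsup le_sup_right⟩
  have hle : finTypeOp star E ≤ sSup (star '' S) :=
    iSup₂_le fun G hG ↦ iSup₂_le fun hGfg hGE ↦ le_sSup ⟨G, ⟨hG, hGfg, hGE⟩, rfl⟩
  obtain ⟨_, ⟨G, ⟨hG, hGfg, hGE⟩, rfl⟩, hFG⟩ :=
    exists_le_of_fg_of_le_sSup (hS.image star) hdir hfg (hF.trans hle)
  exact ⟨G, hG, hGfg, hGE, hFG⟩

lemma le_finTypeOp (h : IsSemistarOperation star) (E : Submodule D K) :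
    E ≤ finTypeOp star E := by
  intro x hx
  rcases eq_or_ne x 0 with rfl | hx0
  · exact zero_mem _
  have hspan : D ∙ x ≠ ⊥ := by simpa only [ne_eq, Submodule.span_singleton_eq_bot]
  exact star_le_finTypeOp hspan (Submodule.fg_span_singleton x)
    ((Submodule.span_singleton_le_iff_mem x E).2 hx)
    (h.le_star hspan (Submodule.mem_span_singleton_self x))

lemma map_mulLeft_finTypeOp_le (h : IsSemistarOperation star) {x : K} (hx : x ≠ 0)
    (E : Submodule D K) :
    (finTypeOp star E).map (LinearMap.mulLeft D x) ≤
      finTypeOp star (E.map (LinearMap.mulLeft D x)) := by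
  refine Submodule.map_le_iff_le_comap.2 <| iSup₂_le fun F hF ↦ iSup₂_le fun hfg hFE ↦ ?_
  rw [← Submodule.map_le_iff_le_comap, ← h.map_smul x hx hF]
  exact star_le_finTypeOp (map_mulLeft_ne_bot hx hF) (hfg.map _) (Submodule.map_mono hFE)

lemma finTypeOp_finTypeOp_le (h : IsSemistarOperation star) (hE : E ≠ ⊥) :
    finTypeOp star (finTypeOp star E) ≤ finTypeOp star E := by
  refine iSup₂_le fun F hF ↦ iSup₂_le fun hfg hFE ↦ ?_
  obtain ⟨G, hG, hGfg, hGE, hFG⟩ := h.exists_fg_le_star hE hfg hFE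
  calc star F ≤ star (star G) := h.mono hF (h.ne_bot hG) hFG
    _ = star G := h.star_star hG
    _ ≤ finTypeOp star E := star_le_finTypeOp hG hGfg hGE

protected theorem finTypeOp (h : IsSemistarOperation star) :
    IsSemistarOperation (finTypeOp star) where
  ne_bot hE := ne_bot_of_le_ne_bot hE (h.le_finTypeOp _)
  map_smul x hx E _ := by
    refine le_antisymm ?_ (h.map_mulLeft_finTypeOp_le hx E)
    have hinv := h.map_mulLeft_finTypeOp_le (inv_ne_zero hx) (E.map (LinearMap.mulLeft D x))
    rw [map_mulLeft_map_mulLeft_of_mul_eq_one (inv_mul_cancel₀ hx)] at hinv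
    rw [← map_mulLeft_map_mulLeft_of_mul_eq_one (mul_inv_cancel₀ hx)
      (finTypeOp star (E.map (LinearMap.mulLeft D x)))]
    exact Submodule.map_mono hinv
  mono _ _ hEF := finTypeOp_mono star hEF
  le_star _ := h.le_finTypeOp _
  star_star hE := (h.finTypeOp_finTypeOp_le hE).antisymm (h.le_finTypeOp _)

lemma star_le_vOp (h : IsSemistarOperation star) (hsemi : star 1 = 1) (hE : E ≠ ⊥) :
    star E ≤ vOp E := by
  refine Submodule.le_div_iff_mul_le.2 ?_
  rcases eq_or_ne (1 / E) ⊥ with hbot | hne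
  · simp only [hbot, Submodule.mul_bot, bot_le]
  calc star E * (1 / E) = 1 / E * star E := mul_comm _ _
    _ ≤ star (1 / E * E) := h.mul_star_le hne hE
    _ ≤ star 1 := h.mono (mul_ne_zero hne hE) one_ne_zero
      (Submodule.le_div_iff_mul_le.1 le_rfl)
    _ = 1 := hsemi

lemma vOp_le_star (h : IsSemistarOperation star) (hE : E ≠ ⊥) (hne : 1 / E ≠ ⊥)
    (hinv : 1 ≤ star (E * (1 / E))) : vOp E ≤ star E := by
  have hv : vOp E * (1 / E) ≤ 1 := Submodule.le_div_iff_mul_le.1 le_rfl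
  have hvne : vOp E ≠ ⊥ :=
    ne_bot_of_le_ne_bot hE (Submodule.le_div_iff_mul_le.2 Submodule.mul_one_div_le_one)
  calc vOp E = vOp E * 1 := (mul_one _).symm
    _ ≤ vOp E * star (E * (1 / E)) := by gcongr
    _ ≤ star (vOp E * (E * (1 / E))) := h.mul_star_le hvne (mul_ne_zero hE hne)
    _ = star (E * (vOp E * (1 / E))) := by rw [mul_left_comm]
    _ ≤ star (E * 1) := h.mono (mul_ne_zero hE (mul_ne_zero hvne hne))
        (mul_ne_zero hE one_ne_zero) (by gcongr)
    _ = star E := by rw [mul_one]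

end IsSemistarOperation

/-- The ideal `I^⋆ ∩ D` of `D`, so that quasi-⋆-ideals are the nonzero ideals it fixes. -/
def quasiStarClosure (star : Submodule D K → Submodule D K) (I : Ideal D) : Ideal D :=
  (star (idealExt K I)).comap (Algebra.linearMap D K)

variable [FaithfulSMul D K]

namespace IsSemistarOperation

lemma le_quasiStarClosure (h : IsSemistarOperation star) (hI : I ≠ ⊥) :
    I ≤ quasiStarClosure star I :=
  Submodule.map_le_iff_le_comap.1 (h.le_star (idealExt_ne_bot hI))

lemma quasiStarClosure_mono (h : IsSemistarOperation star) (hI : I ≠ ⊥) (hIJ : I ≤ J) :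
    quasiStarClosure star I ≤ quasiStarClosure star J :=
  Submodule.comap_mono <| h.mono (idealExt_ne_bot hI)
    (idealExt_ne_bot (ne_bot_of_le_ne_bot hI hIJ)) (Submodule.map_mono hIJ)

lemma quasiStarIdeal_of_closure_le (h : IsSemistarOperation star) (hI : I ≠ ⊥)
    (hle : quasiStarClosure star I ≤ I) : QuasiStarIdeal star I :=
  ⟨hI, hle.antisymm (h.le_quasiStarClosure hI)⟩

lemma quasiStarIdeal_quasiStarClosure (h : IsSemistarOperation star) (hI : I ≠ ⊥) :
    QuasiStarIdeal star (quasiStarClosure star I) := by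
  have hne : quasiStarClosure star I ≠ ⊥ := ne_bot_of_le_ne_bot hI (h.le_quasiStarClosure hI)
  refine h.quasiStarIdeal_of_closure_le hne (Submodule.comap_mono ?_)
  rw [← h.star_star (idealExt_ne_bot hI)]
  exact h.mono (idealExt_ne_bot hne) (h.ne_bot (idealExt_ne_bot hI)) (Submodule.map_comap_le _ _)

lemma quasiStarClosure_eq_top_of_lt (h : IsSemistarOperation star) (hM : QuasiStarMaximal star M)
    (hMJ : M < J) : quasiStarClosure star J = ⊤ := by
  have hJ : J ≠ ⊥ := hMJ.ne_bot
  by_contra hne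
  have heq := hM.2.2 _ (h.quasiStarIdeal_quasiStarClosure hJ) hne
    (hMJ.le.trans (h.le_quasiStarClosure hJ))
  exact hMJ.not_ge (heq ▸ h.le_quasiStarClosure hJ)

lemma mul_quasiStarClosure_le (h : IsSemistarOperation star) (hI : I ≠ ⊥) (hJ : J ≠ ⊥) :
    I * quasiStarClosure star J ≤ quasiStarClosure star (I * J) := by
  refine Submodule.map_le_iff_le_comap.1 ?_
  calc idealExt K (I * quasiStarClosure star J)
      = idealExt K I * idealExt K (quasiStarClosure star J) := idealExt_mul I _
    _ ≤ idealExt K I * star (idealExt K J) :=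
        mul_le_mul_right (Submodule.map_comap_le _ _) _
    _ ≤ star (idealExt K I * idealExt K J) :=
        h.mul_star_le (idealExt_ne_bot hI) (idealExt_ne_bot hJ)
    _ = star (idealExt K (I * J)) := by rw [idealExt_mul]

lemma isPrime_of_quasiStarMaximal (h : IsSemistarOperation star) (hM : QuasiStarMaximal star M) :
    M.IsPrime := by
  have : IsDomain D := (FaithfulSMul.algebraMap_injective D K).isDomain
  refine ⟨hM.2.1, fun {a b} hab ↦ or_iff_not_imp_left.2 fun ha ↦ ?_⟩
  rcases eq_or_ne b 0 with rfl | hb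
  · exact zero_mem M
  have hb_ne : Ideal.span {b} ≠ ⊥ := mt Ideal.span_singleton_eq_bot.1 hb
  have hlt : M < M ⊔ Ideal.span {a} := left_lt_sup.2 (mt (Ideal.span_singleton_le_iff_mem M).1 ha)
  have hle : Ideal.span {b} * (M ⊔ Ideal.span {a}) ≤ M := by
    rw [Ideal.mul_sup, Ideal.span_singleton_mul_span_singleton, mul_comm b]
    exact sup_le Ideal.mul_le_right ((Ideal.span_singleton_le_iff_mem M).2 hab)
  rw [← Ideal.span_singleton_le_iff_mem]
  calc Ideal.span {b} = Ideal.span {b} * quasiStarClosure star (M ⊔ Ideal.span {a}) := by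
        rw [h.quasiStarClosure_eq_top_of_lt hM hlt, Ideal.mul_top]
    _ ≤ quasiStarClosure star (Ideal.span {b} * (M ⊔ Ideal.span {a})) :=
        h.mul_quasiStarClosure_le hb_ne hlt.ne_bot
    _ ≤ quasiStarClosure star M :=
        h.quasiStarClosure_mono (mul_ne_zero hb_ne hlt.ne_bot) hle
    _ = M := hM.1.2

lemma quasiStarIdeal_finTypeOp_sSup (h : IsSemistarOperation star) {c : Set (Ideal D)}
    (hne : c.Nonempty) (hdir : DirectedOn (· ≤ ·) c)
    (hc : ∀ I ∈ c, QuasiStarIdeal (finTypeOp star) I) :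
    QuasiStarIdeal (finTypeOp star) (sSup c) := by
  obtain ⟨I₀, hI₀⟩ := hne
  have hbot : sSup c ≠ ⊥ := ne_bot_of_le_ne_bot (hc I₀ hI₀).1 (le_sSup hI₀)
  refine h.finTypeOp.quasiStarIdeal_of_closure_le hbot fun d hd ↦ ?_
  obtain ⟨F, hF, hfg, hFc, hdF⟩ := h.exists_fg_le_star (idealExt_ne_bot hbot)
    (Submodule.fg_span_singleton (algebraMap D K d))
    ((Submodule.span_singleton_le_iff_mem _ _).2 hd)
  have hsup : F ≤ sSup (idealExt K '' c) := by
    rw [sSup_image]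
    exact hFc.trans_eq (Submodule.gc_map_comap (Algebra.linearMap D K)).l_sSup
  obtain ⟨_, ⟨I, hI, rfl⟩, hFI⟩ := exists_le_of_fg_of_le_sSup (Set.image_nonempty.2 ⟨I₀, hI₀⟩)
    (directedOn_image.2 (hdir.mono fun _ _ ↦ Submodule.map_mono)) hfg hsup
  have hdI : d ∈ quasiStarClosure (finTypeOp star) I :=
    star_le_finTypeOp hF hfg hFI (hdF (Submodule.mem_span_singleton_self _))
  exact le_sSup hI ((hc I hI).2 ▸ hdI)

lemma exists_quasiStarMaximal_le (h : IsSemistarOperation star)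
    (hI : QuasiStarIdeal (finTypeOp star) I) (hI_top : I ≠ ⊤) :
    ∃ M, QuasiStarMaximal (finTypeOp star) M ∧ I ≤ M := by
  let S : Set (Ideal D) := {J | QuasiStarIdeal (finTypeOp star) J ∧ J ≠ ⊤}
  have hchain_ub : ∀ c ⊆ S, IsChain (· ≤ ·) c → ∀ J ∈ c, ∃ B ∈ S, ∀ L ∈ c, L ≤ B := by
    intro c hc hchain J hJ
    refine ⟨sSup c, ⟨h.quasiStarIdeal_finTypeOp_sSup ⟨J, hJ⟩ hchain.directedOn
      fun L hL ↦ (hc hL).1, ?_⟩, fun _ ↦ le_sSup⟩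
    rw [Ideal.ne_top_iff_one, Submodule.mem_sSup_of_directed ⟨J, hJ⟩ hchain.directedOn]
    rintro ⟨L, hL, hone⟩
    exact (hc hL).2 ((Ideal.eq_top_iff_one L).2 hone)
  obtain ⟨M, hIM, hM⟩ := zorn_le_nonempty₀ S hchain_ub I ⟨hI, hI_top⟩
  exact ⟨M, ⟨hM.prop.1, hM.prop.2, fun J hJ hJ_top hMJ ↦
    (hM.eq_of_le ⟨hJ, hJ_top⟩ hMJ).symm⟩, hIM⟩

lemma quasiStarClosure_finTypeOp_eq_top (h : IsSemistarOperation star) (hI : I ≠ ⊥)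
    (hM : ∀ M, QuasiStarMaximal (finTypeOp star) M → ¬ I ≤ M) :
    quasiStarClosure (finTypeOp star) I = ⊤ := by
  by_contra hne
  obtain ⟨M, hMmax, hle⟩ :=
    h.exists_quasiStarMaximal_le (h.finTypeOp.quasiStarIdeal_quasiStarClosure hI) hne
  exact hM M hMmax ((h.finTypeOp.le_quasiStarClosure hI).trans hle)

end IsSemistarOperation

end Semistar

section Prufer

variable {F : Submodule D K}

omit [IsDomain D] [IsFractionRing D K] in
lemma exists_mem_mul_one_div_of_valuationRing (S : Submonoid D) (V : Type*) [CommRing V]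
    [IsDomain V] [ValuationRing V] [Algebra D V] [Algebra V K] [IsScalarTower D V K]
    [IsLocalization S V] [IsFractionRing V K] (hF : F ≠ ⊥) (hfg : F.FG) :
    ∃ s ∈ S, algebraMap D K s ∈ F * (1 / F) := by
  obtain ⟨T, rfl⟩ := hfg
  have hT : T.Nonempty := by
    by_contra! h
    simp [h] at hF
  obtain ⟨a, haT, hmax⟩ := T.exists_max_image (ValuationRing.valuation V K) hT
  have ha : a ≠ 0 := by
    rintro rfl
    refine hF (Submodule.span_eq_bot.2 fun y hy ↦ ?_)
    simpa using hmax y hy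
  have hquot : ∀ y : T, ∃ w : V, algebraMap V K w = y / a := fun y ↦ by
    rw [← ValuationRing.mem_integer_iff, Valuation.mem_integer_iff, map_div₀]
    exact div_le_one_of_le₀ (hmax y y.2) zero_le
  choose w hw using hquot
  obtain ⟨s, hs⟩ := IsLocalization.exist_integer_multiples_of_finite S w
  have hsa : algebraMap D K s / a ∈ 1 / Submodule.span D (T : Set K) := by
    refine Submodule.mem_div_iff_forall_mul_mem.2 fun x hx ↦ ?_
    refine (Submodule.span_le (p := (1 : Submodule D K).comap (LinearMap.mulLeft D _))).2 ?_ hx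
    intro y hy
    obtain ⟨d, hd⟩ := hs ⟨y, hy⟩
    refine Submodule.mem_one.2 ⟨d, ?_⟩
    calc algebraMap D K d = algebraMap D K s * (y / a) := by
          rw [IsScalarTower.algebraMap_apply D V K, hd, Algebra.smul_def, map_mul, hw,
            ← IsScalarTower.algebraMap_apply]
      _ = algebraMap D K s / a * y := by ring
  refine ⟨s, s.2, ?_⟩
  rw [← mul_div_cancel₀ (algebraMap D K s) ha]
  exact Submodule.mul_mem_mul (Submodule.subset_span haT) hsa

-- `K` is itself a valuation ring, and is the localization of `D` at the zero ideal.
lemma mul_one_div_ne_bot_of_fg (hF : F ≠ ⊥) (hfg : F.FG) : F * (1 / F) ≠ ⊥ := by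
  obtain ⟨s, hs, hmem⟩ :=
    exists_mem_mul_one_div_of_valuationRing (nonZeroDivisors D) K hF hfg
  exact Submodule.ne_bot_iff _ |>.2
    ⟨_, hmem, IsFractionRing.to_map_ne_zero_of_mem_nonZeroDivisors hs⟩

lemma exists_notMem_mem_mul_one_div_of_isValuationDomain (M : Ideal D) [M.IsPrime]
    (hM : IsValuationDomain (Localization.AtPrime M)) (hF : F ≠ ⊥) (hfg : F.FG) :
    ∃ s ∉ M, algebraMap D K s ∈ F * (1 / F) := by
  obtain ⟨_, _⟩ := hM
  let V := Localization.AtPrime M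
  let := IsLocalization.localizationAlgebraOfSubmonoidLe V K M.primeCompl (nonZeroDivisors D)
    M.primeCompl_le_nonZeroDivisors
  have : IsScalarTower D V K := IsLocalization.localization_isScalarTower_of_submonoid_le V K
    M.primeCompl (nonZeroDivisors D) M.primeCompl_le_nonZeroDivisors
  have : IsFractionRing V K :=
    IsFractionRing.isFractionRing_of_isDomain_of_isLocalization M.primeCompl V K
  exact exists_mem_mul_one_div_of_valuationRing M.primeCompl V hF hfg

variable {star : Submodule D K → Submodule D K}

lemma StarPMD.one_le_finTypeOp_mul_one_div (hPMD : StarPMD star) (h : IsSemistarOperation star)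
    (hF : F ≠ ⊥) (hfg : F.FG) : 1 ≤ finTypeOp star (F * (1 / F)) := by
  have hext : idealExt K ((F * (1 / F)).comap (Algebra.linearMap D K)) = F * (1 / F) :=
    idealExt_comap Submodule.mul_one_div_le_one
  have hI : (F * (1 / F)).comap (Algebra.linearMap D K) ≠ ⊥ := by
    intro h0
    rw [h0, idealExt, Submodule.map_bot] at hext
    exact mul_one_div_ne_bot_of_fg hF hfg hext.symm
  have htop := h.quasiStarClosure_finTypeOp_eq_top hI fun M hM hle ↦ by
    have := h.finTypeOp.isPrime_of_quasiStarMaximal hM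
    obtain ⟨s, hsM, hs⟩ :=
      exists_notMem_mem_mul_one_div_of_isValuationDomain M (hPMD M hM) hF hfg
    exact hsM (hle hs)
  refine Submodule.one_eq_range.trans_le (LinearMap.range_le_iff_comap.2 ?_)
  rw [← htop, quasiStarClosure, hext]

lemma StarPMD.star_eq_vOp (hPMD : StarPMD star) (h : IsSemistarOperation star)
    (hsemi : star 1 = 1) (hF : F ≠ ⊥) (hfg : F.FG) : star F = vOp F := by
  have hne : F * (1 / F) ≠ ⊥ := mul_one_div_ne_bot_of_fg hF hfg
  refine (h.star_le_vOp hsemi hF).antisymm (h.vOp_le_star hF (right_ne_zero_of_mul hne) ?_)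
  exact (hPMD.one_le_finTypeOp_mul_one_div h hF hfg).trans (h.finTypeOp_le_star hne)

theorem StarPMD.finTypeOp_eq_finTypeOp_vOp (hPMD : StarPMD star) (h : IsSemistarOperation star)
    (hsemi : star 1 = 1) : finTypeOp star = finTypeOp vOp :=
  funext fun _ ↦ iSup_congr fun _ ↦ iSup_congr fun hF ↦ iSup_congr fun hfg ↦ iSup_congr fun _ ↦
    hPMD.star_eq_vOp h hsemi hF hfg

end Prufer

section AlmostDedekind

omit [IsDomain D] [IsFractionRing D K]

variable {star star' : Submodule D K → Submodule D K}

lemma StarADD.starPMD (hADD : StarADD star) : StarPMD star := fun M _ hM ↦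
  let ⟨hdom, _⟩ := hADD M hM
  ⟨hdom, inferInstance⟩

lemma QuasiStarMaximal.congr [FaithfulSMul D K] (heq : ∀ E ≠ ⊥, star E = star' E) {M : Ideal D}
    (hM : QuasiStarMaximal star M) : QuasiStarMaximal star' M := by
  have hquasi (J : Ideal D) : QuasiStarIdeal star J ↔ QuasiStarIdeal star' J :=
    and_congr_right fun hJ ↦ by rw [heq _ (idealExt_ne_bot hJ)]
  exact ⟨(hquasi M).1 hM.1, hM.2.1, fun J hJ ↦ hM.2.2 J ((hquasi J).2 hJ)⟩

end AlmostDedekind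

/-- `D` an integral domain, `⋆` a (semi)star operation on `D`
(i.e. `D^⋆ = D`). Then `D` is a ⋆-almost Dedekind domain iff `D` is a `t`-almost Dedekind
domain and `⋆_f = t` (on every nonzero submodule). -/
theorem starADD_iff_tADD_and_finType_eq_t
    (star : Submodule D K → Submodule D K) (hstar : IsSemistarOperation star)
    (hsemi : star (1 : Submodule D K) = 1) :
    StarADD star ↔
      (StarADD (vOp (D := D) (K := K)) ∧
        ∀ E : Submodule D K, E ≠ ⊥ → finTypeOp star E = finTypeOp (vOp (D := D) (K := K)) E) := by
  constructor
  · intro hADD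
    have heq := hADD.starPMD.finTypeOp_eq_finTypeOp_vOp hstar hsemi
    exact ⟨fun M _ hM ↦ hADD M (heq ▸ hM), fun E _ ↦ congrFun heq E⟩
  · rintro ⟨hADD, heq⟩
    exact fun M _ hM ↦ hADD M (hM.congr heq)

end Statement
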